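/- arXiv:1906.08129 — 2 statements merged into one kernel-verified Lean document; each statement's English description precedes it below -/
import Mathlib

section
/- Let K ≥ 2, let g : {1,…,K} → (0,∞) be a decreasing (g(s) ≥ g(s+1)) and (1/x)-convex sequence, and let p_1 ≥ p_2 ≥ … ≥ p_K ≥ 0 with U_s = g(s)·∑_{i=1}^{s} p_i. If U_{s₀} > U_{s₀+1} for some s₀ ∈ {1,…,K−1}, then U_t > U_{t+1} for every t with s₀ ≤ t ≤ K−1; that is, once the sequence U_1, U_2, …, U_K starts to strictly decrease it keeps strictly decreasing, so it has reached its global maximum at or before the first decrease. -/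
/-!
Write `U s = F s / h s` with `F s = ∑ i ∈ Icc 1 s, p i` and `h s = 1 / g s`. Since `p` is
decreasing, `F` is a concave sequence, while `h` is a positive convex one. Hence a drop of the ratio
`F / h` from `s` to `s + 1` forces a drop from `s + 1` to `s + 2`, as long as `0 ≤ F (s + 1)`:
`F (s + 2)` is at most the linear extrapolation `2 * F (s + 1) - F s`, and `h (s + 2)` is at least
`2 * h (s + 1) - h s`.
-/

theorem sum_Icc_add_sum_Icc_le_two_nsmul {M : Type*} [AddCommMonoid M] [PartialOrder M]
    [IsOrderedAddMonoid M] {p : ℕ → M} {m n : ℕ} (hmn : m ≤ n + 1) (hp : p (n + 2) ≤ p (n + 1)) :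
    ∑ i ∈ Finset.Icc m n, p i + ∑ i ∈ Finset.Icc m (n + 2), p i ≤
      2 • ∑ i ∈ Finset.Icc m (n + 1), p i := by
  rw [Finset.sum_Icc_succ_top (Nat.le_succ_of_le hmn), Finset.sum_Icc_succ_top hmn, two_nsmul,
    add_left_comm]
  gcongr

section

variable {𝕜 : Type*} [Field 𝕜] [LinearOrder 𝕜] [IsStrictOrderedRing 𝕜]

theorem div_lt_div_of_concave_of_convex {x y z a b c : 𝕜} (ha : 0 < a) (hb : 0 < b) (hc : 0 < c)
    (hy : 0 ≤ y) (hconcave : x + z ≤ 2 • y) (hconvex : 2 • b ≤ a + c) (hdrop : y / b < x / a) :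
    z / c < y / b := by
  rw [two_nsmul] at hconcave hconvex
  rw [div_lt_div_iff₀ hb ha] at hdrop
  rw [div_lt_div_iff₀ hc hb]
  calc z * b ≤ (y + y - x) * b := by gcongr; linarith
    _ < y * (b + b - a) := by linarith
    _ ≤ y * c := by gcongr; linarith

theorem div_succ_lt_div_of_concave_of_convex {F h : ℕ → 𝕜} {m n : ℕ}
    (hpos : ∀ s, m ≤ s → s ≤ n → 0 < h s) (hnonneg : ∀ s, m ≤ s → s ≤ n → 0 ≤ F s)
    (hconcave : ∀ s, m ≤ s → s + 2 ≤ n → F s + F (s + 2) ≤ 2 • F (s + 1))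
    (hconvex : ∀ s, m ≤ s → s + 2 ≤ n → 2 • h (s + 1) ≤ h s + h (s + 2))
    (hdrop : F (m + 1) / h (m + 1) < F m / h m) {t : ℕ} (hmt : m ≤ t) (htn : t + 1 ≤ n) :
    F (t + 1) / h (t + 1) < F t / h t := by
  induction t, hmt using Nat.le_induction with
  | base => exact hdrop
  | succ t hmt ih =>
    exact div_lt_div_of_concave_of_convex (hpos t hmt (by lia)) (hpos (t + 1) (by lia) (by lia))
      (hpos (t + 2) (by lia) htn) (hnonneg (t + 1) (by lia) (by lia)) (hconcave t hmt htn)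
      (hconvex t hmt htn) (ih (by lia))

theorem stmt_2_general {K : ℕ} {g p : ℕ → 𝕜}
    (hgpos : ∀ s, 1 ≤ s → s ≤ K → 0 < g s)
    (hgconv : ∀ s, 1 ≤ s → s + 2 ≤ K → 1 / g (s + 1) ≤ (1 / g s + 1 / g (s + 2)) / 2)
    (hsum : ∀ s, 1 ≤ s → s ≤ K → 0 ≤ ∑ i ∈ Finset.Icc 1 s, p i)
    (hpdec : ∀ i, 1 ≤ i → i + 1 ≤ K → p (i + 1) ≤ p i)
    {U : ℕ → 𝕜} (hU : ∀ s, U s = g s * ∑ i ∈ Finset.Icc 1 s, p i)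
    {s₀ : ℕ} (hs₀ : 1 ≤ s₀) (hdrop : U (s₀ + 1) < U s₀) {t : ℕ} (hst : s₀ ≤ t) (htK : t + 1 ≤ K) :
    U (t + 1) < U t := by
  have hU_div (s : ℕ) : U s = (∑ i ∈ Finset.Icc 1 s, p i) / (1 / g s) := by
    rw [hU, div_div_eq_mul_div, div_one, mul_comm]
  have hconcave (s : ℕ) (_ : s₀ ≤ s) (hs : s + 2 ≤ K) :
      ∑ i ∈ Finset.Icc 1 s, p i + ∑ i ∈ Finset.Icc 1 (s + 2), p i ≤
        2 • ∑ i ∈ Finset.Icc 1 (s + 1), p i :=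
    sum_Icc_add_sum_Icc_le_two_nsmul (by lia) (hpdec (s + 1) (by lia) hs)
  have hconvex (s : ℕ) (hs₀s : s₀ ≤ s) (hs : s + 2 ≤ K) :
      2 • (1 / g (s + 1)) ≤ 1 / g s + 1 / g (s + 2) := by
    rw [two_nsmul]
    linarith [hgconv s (hs₀.trans hs₀s) hs]
  simp only [hU_div] at hdrop ⊢
  exact div_succ_lt_div_of_concave_of_convex (h := fun s ↦ 1 / g s)
    (fun s hs hsK ↦ one_div_pos.2 (hgpos s (hs₀.trans hs) hsK))
    (fun s hs ↦ hsum s (hs₀.trans hs)) hconcave hconvex hdrop hst htK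

end

/-- For a decreasing, positive, (1/x)-convex sequence `g` and
sorted nonnegative `p_1 ≥ … ≥ p_K`, with `U s = g s * ∑_{i=1}^s p_i`:
once the sequence `U 1, …, U K` strictly decreases at some `s₀ ∈ {1,…,K−1}`,
it keeps strictly decreasing for all `t` with `s₀ ≤ t ≤ K−1`. -/
theorem stmt_2 (K : ℕ) (hK : 2 ≤ K) (g p : ℕ → ℝ)
    (hgpos : ∀ s, 1 ≤ s → s ≤ K → 0 < g s)
    (hgdec : ∀ s, 1 ≤ s → s + 1 ≤ K → g (s + 1) ≤ g s)
    (hgconv : ∀ s, 1 ≤ s → s + 2 ≤ K →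
      1 / g (s + 1) ≤ (1 / g s + 1 / g (s + 2)) / 2)
    (hpnn : ∀ i, 1 ≤ i → i ≤ K → 0 ≤ p i)
    (hpdec : ∀ i, 1 ≤ i → i + 1 ≤ K → p (i + 1) ≤ p i)
    (U : ℕ → ℝ) (hU : ∀ s, U s = g s * ∑ i ∈ Finset.Icc 1 s, p i)
    (s₀ : ℕ) (hs₀1 : 1 ≤ s₀) (hs₀K : s₀ + 1 ≤ K)
    (hdrop : U s₀ > U (s₀ + 1)) :
    ∀ t, s₀ ≤ t → t + 1 ≤ K → U t > U (t + 1) := by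
  have hsum (s : ℕ) (_ : 1 ≤ s) (hs : s ≤ K) : 0 ≤ ∑ i ∈ Finset.Icc 1 s, p i :=
    Finset.sum_nonneg fun i hi ↦
      hpnn i (Finset.mem_Icc.1 hi).1 ((Finset.mem_Icc.1 hi).2.trans hs)
  exact fun t ↦ stmt_2_general hgpos hgconv hsum hpdec hU hs₀1 hdrop
end

section
/- Let 𝒴 be a finite set of K ≥ 1 classes, let p : 𝒴 → ℝ be nonnegative, and let g : {1,…,K} → ℝ be nonnegative, decreasing (g(s) ≥ g(s+1) for all s ∈ {1,…,K−1}) and concave (g(s+1) ≥ (g(s) + g(s+2))/2 for all s ∈ {1,…,K−2}). Define F(∅) = 0 and F(Ŷ) = g(|Ŷ|)·∑_{c∈Ŷ} p(c) for nonempty Ŷ ⊆ 𝒴. Then F is submodular: for all A ⊆ B ⊆ 𝒴 and every x ∈ 𝒴 ∖ B, F(A ∪ {x}) − F(A) ≥ F(B ∪ {x}) − F(B). -/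
/-!
Write `d s = g s - g (s + 1)`. For `x ∉ S`, the marginal gain of `x` at `S` is
`g (|S| + 1) * p x - d |S| * ∑ c ∈ S, p c`. The first term decreases in `S` because `g` does. The
dilution loss `d |S| * ∑ c ∈ S, p c` is itself a set utility, with `d` in place of `g`, and it
increases in `S` because `d` is nonnegative (`g` is decreasing) and increasing (`g` is concave).
-/

section SetUtility

variable {Y R : Type*} [Ring R]

/-- The expected set-based utility of `S`, for weights `p` and a discount `g` depending on the size
of `S`. On the empty set it is `0` whatever `g 0` is, because the sum is empty. -/
def setUtility (g : ℕ → R) (p : Y → R) (S : Finset Y) : R :=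
  g S.card * ∑ c ∈ S, p c

@[simp]
theorem setUtility_empty (g : ℕ → R) (p : Y → R) : setUtility g p ∅ = 0 := by
  simp [setUtility]

theorem eq_setUtility {g : ℕ → R} {p : Y → R} {F : Finset Y → R} (hF0 : F ∅ = 0)
    (hF : ∀ S : Finset Y, S.Nonempty → F S = g S.card * ∑ c ∈ S, p c) :
    F = setUtility g p := by
  ext S
  rcases S.eq_empty_or_nonempty with rfl | hS
  · rw [hF0, setUtility_empty]
  · exact hF S hS

theorem setUtility_insert_sub [DecidableEq Y] (g : ℕ → R) (p : Y → R) {S : Finset Y} {x : Y}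
    (hx : x ∉ S) :
    setUtility g p (insert x S) - setUtility g p S =
      g (S.card + 1) * p x - setUtility (fun s ↦ g s - g (s + 1)) p S := by
  simp only [setUtility, Finset.card_insert_of_notMem hx, Finset.sum_insert hx]
  noncomm_ring

variable [PartialOrder R] [IsOrderedRing R]

theorem setUtility_nonneg {g : ℕ → R} {p : Y → R} {K : ℕ} (hp : ∀ c, 0 ≤ p c)
    (hg : ∀ s ∈ Set.Ico 1 K, 0 ≤ g s) {S : Finset Y} (hS : S.card < K) :
    0 ≤ setUtility g p S := by
  rcases S.eq_empty_or_nonempty with rfl | hne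
  · rw [setUtility_empty]
  · exact mul_nonneg (hg _ ⟨hne.card_pos, hS⟩) (Finset.sum_nonneg fun c _ ↦ hp c)

theorem setUtility_mono {g : ℕ → R} {p : Y → R} {K : ℕ} (hp : ∀ c, 0 ≤ p c)
    (hg : ∀ s ∈ Set.Ico 1 K, 0 ≤ g s) (hmono : MonotoneOn g (Set.Ico 1 K))
    {A B : Finset Y} (hAB : A ⊆ B) (hB : B.card < K) :
    setUtility g p A ≤ setUtility g p B := by
  rcases A.eq_empty_or_nonempty with rfl | hA
  · simpa only [setUtility_empty] using setUtility_nonneg hp hg hB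
  have hcard : A.card ≤ B.card := Finset.card_le_card hAB
  have hA_mem : A.card ∈ Set.Ico 1 K := ⟨hA.card_pos, hcard.trans_lt hB⟩
  have hB_mem : B.card ∈ Set.Ico 1 K := ⟨(hA.mono hAB).card_pos, hB⟩
  exact mul_le_mul (hmono hA_mem hB_mem hcard)
    (Finset.sum_le_sum_of_subset_of_nonneg hAB fun c _ _ ↦ hp c)
    (Finset.sum_nonneg fun c _ ↦ hp c) (hg _ hB_mem)

end SetUtility

theorem monotoneOn_sub_succ_of_concave {G : Type*} [AddCommGroup G] [PartialOrder G]
    [IsOrderedAddMonoid G] {g : ℕ → G} {I : Set ℕ} (hI : I.OrdConnected)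
    (hconc : ∀ s ∈ I, s + 1 ∈ I → g s + g (s + 2) ≤ 2 • g (s + 1)) :
    MonotoneOn (fun s ↦ g s - g (s + 1)) I :=
  monotoneOn_of_le_add_one hI fun s _ hs hs' ↦
    sub_le_sub_iff.mpr <| by simpa only [two_nsmul] using hconc s hs hs'

theorem stmt_15_general {Y R : Type*} [DecidableEq Y] [Ring R] [PartialOrder R] [IsOrderedRing R]
    {K : ℕ} {p : Y → R} (hp : ∀ c, 0 ≤ p c) {g : ℕ → R}
    (hdec : ∀ s, 1 ≤ s → s + 1 ≤ K → g (s + 1) ≤ g s)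
    (hconc : ∀ s, 1 ≤ s → s + 2 ≤ K → g s + g (s + 2) ≤ 2 • g (s + 1))
    {A B : Finset Y} (hAB : A ⊆ B) (hB : B.card < K) {x : Y} (hx : x ∉ B) :
    setUtility g p (insert x B) - setUtility g p B ≤
      setUtility g p (insert x A) - setUtility g p A := by
  have hcard : A.card ≤ B.card := Finset.card_le_card hAB
  have hanti : AntitoneOn g (Set.Icc 1 K) :=
    antitoneOn_of_add_one_le Set.ordConnected_Icc fun s _ hs hs' ↦ hdec s hs.1 hs'.2
  have hgain : g (B.card + 1) * p x ≤ g (A.card + 1) * p x :=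
    mul_le_mul_of_nonneg_right
      (hanti ⟨by lia, by lia⟩ ⟨by lia, by lia⟩ (Nat.succ_le_succ hcard)) (hp x)
  have hloss : setUtility (fun s ↦ g s - g (s + 1)) p A ≤
      setUtility (fun s ↦ g s - g (s + 1)) p B :=
    setUtility_mono hp (fun s hs ↦ sub_nonneg.mpr (hdec s hs.1 hs.2))
      (monotoneOn_sub_succ_of_concave Set.ordConnected_Ico fun s hs hs' ↦ hconc s hs.1 hs'.2)
      hAB hB
  rw [setUtility_insert_sub g p hx, setUtility_insert_sub g p fun hxA ↦ hx (hAB hxA)]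
  exact sub_le_sub hgain hloss

/-- For nonnegative weights `p`, and `g` nonnegative, decreasing
and concave on `{1,…,K}`, the set function `F ∅ = 0`,
`F Ŷ = g |Ŷ| · ∑_{c∈Ŷ} p c` (for nonempty `Ŷ`) is submodular. -/
theorem stmt_15 {Y : Type*} [Fintype Y] [DecidableEq Y] (K : ℕ) (hK : 1 ≤ K)
    (hcard : Fintype.card Y = K)
    (p : Y → ℝ) (hp : ∀ c, 0 ≤ p c)
    (g : ℕ → ℝ)
    (hg0 : ∀ s, 1 ≤ s → s ≤ K → 0 ≤ g s)
    (hgdec : ∀ s, 1 ≤ s → s + 1 ≤ K → g (s + 1) ≤ g s)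
    (hgconc : ∀ s, 1 ≤ s → s + 2 ≤ K → (g s + g (s + 2)) / 2 ≤ g (s + 1))
    (F : Finset Y → ℝ) (hF0 : F ∅ = 0)
    (hF : ∀ S : Finset Y, S.Nonempty → F S = g S.card * ∑ c ∈ S, p c) :
    ∀ A B : Finset Y, A ⊆ B → ∀ x : Y, x ∉ B →
      F (insert x B) - F B ≤ F (insert x A) - F A := by
  obtain rfl : F = setUtility g p := eq_setUtility hF0 hF
  exact fun A B hAB x hx ↦ stmt_15_general hp hgdec
    (fun s hs hs' ↦ by rw [two_nsmul]; linarith [hgconc s hs hs'])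
    hAB (hcard ▸ Finset.card_lt_univ_of_notMem hx) hx
end
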